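/- arXiv:2310.01769 — 8 statements merged into one kernel-verified Lean document; each statement's English description precedes it below -/
import Mathlib

section
/- Let n, k, r be positive integers with r ≤ n, let σ1 > 0, and let Σ ∈ ℝ^{n×n} be diagonal with diagonal entries σ_i satisfying 0 ≤ σ_i ≤ σ1 for all i and σ_i = 0 for i > r. Let X ∈ ℝ^{n×k} have rows x_1ᵀ, …, x_nᵀ with ‖x_j‖² ≤ 2σ1 for all j, and let X⁺ = X − η(XXᵀ − Σ)X with rows (x_i⁺)ᵀ. If 0 ≤ η ≤ 1/(2nσ1), then for every i > r, ‖x_i⁺‖² ≤ ‖x_i‖². -/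
/-!
Write `x` for the row of index `i` and `v = ∑ j, c j • x_j` with `c j = ⟪x, x_j⟫`, so that the new row
is `x - η v`. Then `⟪x, v⟫ = ∑ j, c j ^ 2 =: S`, while Cauchy–Schwarz in each coordinate gives
`‖v‖² ≤ S * ∑ j, ‖x_j‖² ≤ 2 n σ1 S`. Hence
`‖x - η v‖² = ‖x‖² - 2 η S + η² ‖v‖² ≤ ‖x‖² - η S`, because `2 n σ1 η ≤ 1`.
-/

open Matrix

/-- **One-step monotonicity of redundant row norms.**
For a gradient-descent step `X⁺ = X − η (XXᵀ − Σ) X` of symmetric matrix factorization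
with step size `0 ≤ η ≤ 1/(2 n σ1)`, if every row of `X` has squared norm at most `2σ1`,
then the squared norm of every row of index `> r` (where `Σ` vanishes) does not increase. -/
theorem redundant_row_norm_nonincreasing
    (n k r : ℕ) (σ1 : ℝ) (σ : Fin n → ℝ) (η : ℝ)
    (X : Matrix (Fin n) (Fin k) ℝ)
    (hr : 0 < r) (hrn : r ≤ n) (hσ1 : 0 < σ1)
    (hσnn : ∀ i : Fin n, 0 ≤ σ i) (hσub : ∀ i : Fin n, σ i ≤ σ1)
    (hσ0 : ∀ i : Fin n, r ≤ (i : ℕ) → σ i = 0)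
    (hrow : ∀ j : Fin n, ∑ l, X j l ^ 2 ≤ 2 * σ1)
    (hη0 : 0 ≤ η) (hη : η ≤ 1 / (2 * n * σ1)) :
    ∀ i : Fin n, r ≤ (i : ℕ) →
      ∑ l, ((X - η • ((X * Xᵀ - Matrix.diagonal σ) * X)) i l) ^ 2 ≤
        ∑ l, (X i l) ^ 2 := by
  intro i hi
  set c : Fin n → ℝ := fun j => ∑ l, X i l * X j l with hc
  set v : Fin k → ℝ := fun l => ∑ j, c j * X j l with hv
  set S : ℝ := ∑ j, c j ^ 2 with hS
  have hstep : ∀ l, (X - η • ((X * Xᵀ - Matrix.diagonal σ) * X)) i l = X i l - η * v l := by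
    intro l
    have hd : ∀ j, Matrix.diagonal σ i j = 0 := by
      intro j
      rw [Matrix.diagonal_apply, hσ0 i hi, ite_self]
    simp [Matrix.mul_apply, Matrix.sub_apply, hd, hv, hc]
  have hS0 : 0 ≤ S := Finset.sum_nonneg fun j _ => sq_nonneg _
  have hinner : ∑ l, X i l * v l = S := by
    simp only [hv, hS, Finset.mul_sum]
    rw [Finset.sum_comm]
    refine Finset.sum_congr rfl fun j _ => ?_
    rw [sq]
    nth_rewrite 3 [hc]
    rw [Finset.mul_sum]
    exact Finset.sum_congr rfl fun l _ => by ring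
  have hnorm : ∑ l, v l ^ 2 ≤ S * (n * (2 * σ1)) := by
    calc ∑ l, v l ^ 2 ≤ ∑ l, S * ∑ j, X j l ^ 2 :=
          Finset.sum_le_sum fun l _ => Finset.sum_mul_sq_le_sq_mul_sq _ _ _
      _ = S * ∑ j, ∑ l, X j l ^ 2 := by rw [← Finset.mul_sum, Finset.sum_comm]
      _ ≤ S * (n * (2 * σ1)) := by
          gcongr
          calc ∑ j, ∑ l, X j l ^ 2 ≤ ∑ _j : Fin n, 2 * σ1 :=
                Finset.sum_le_sum fun j _ => hrow j
            _ = n * (2 * σ1) := by simp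
  have hn : (0 : ℝ) < n := by exact_mod_cast hr.trans_le hrn
  have hη1 : η * (2 * n * σ1) ≤ 1 := (le_div_iff₀ (by positivity)).1 hη
  have hexp : ∑ l, (X i l - η * v l) ^ 2
      = ∑ l, X i l ^ 2 - 2 * η * S + η ^ 2 * ∑ l, v l ^ 2 := by
    rw [← hinner, Finset.mul_sum, Finset.mul_sum, ← Finset.sum_sub_distrib,
      ← Finset.sum_add_distrib]
    exact Finset.sum_congr rfl fun l _ => by ring
  simp only [hstep]
  rw [hexp]
  have h1 : η ^ 2 * ∑ l, v l ^ 2 ≤ η ^ 2 * (S * (n * (2 * σ1))) := by gcongr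
  have h2 : η * S * (η * (2 * n * σ1)) ≤ η * S * 1 := by gcongr
  have h3 : 0 ≤ η * S := mul_nonneg hη0 hS0
  linarith
end

section
/- Let η > 0, let T2 be a positive integer, and let (A_t)_{t ≥ T2} be the real sequence defined by A_{t+1} = A_t·(1 − 4η·A_t) for t ≥ T2, with A_{T2} ≥ 0 and η·A_{T2} ≤ 1/8. Then for all t ≥ T2, η·t·A_t ≥ min{ η·T2·A_{T2}, 1/16 }. -/
/-!
Put `x = η A_t` and `m = min (η T2 A_{T2}) (1/16)`. The rescaled recursion is `x ↦ x (1 - 4 x)`,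
which maps `[0, 1/8]` to itself and is increasing there. If `m ≤ t x`, then with `y = m / t`
monotonicity gives `(t + 1) x (1 - 4 x) ≥ (t + 1) y (1 - 4 y) = m + y (1 - 4 m - 4 y) ≥ m`,
because `y ≤ m ≤ 1/16`. So `m ≤ t x` propagates by induction.
-/

/-- One step of the induction, for the rescaled variable `x = η A_t`. -/
lemma logistic_step {m t x : ℝ} (hm0 : 0 ≤ m) (hm : m ≤ 1 / 16) (ht : 1 ≤ t)
    (hx : x ≤ 1 / 8) (h : m ≤ t * x) : m ≤ (t + 1) * (x * (1 - 4 * x)) := by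
  have htp : 0 < t := by linarith
  obtain ⟨y, hy⟩ : ∃ y, y = m / t := ⟨_, rfl⟩
  have hyt : t * y = m := by rw [hy]; field_simp
  have hy0 : 0 ≤ y := by rw [hy]; positivity
  have hym : y ≤ m := by rw [hy]; exact div_le_self hm0 ht
  have hyx : y ≤ x := by rw [hy, div_le_iff₀ htp]; linarith
  have hmono : y * (1 - 4 * y) ≤ x * (1 - 4 * x) := by
    have := mul_nonneg (sub_nonneg.2 hyx) (show 0 ≤ 1 - 4 * (x + y) by linarith)
    linarith
  calc m ≤ m + y * (1 - 4 * m - 4 * y) :=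
        le_add_of_nonneg_right (mul_nonneg hy0 (by linarith))
    _ = (t + 1) * (y * (1 - 4 * y)) := by rw [← hyt]; ring
    _ ≤ (t + 1) * (x * (1 - 4 * x)) := by gcongr

/-- **Scalar logistic-type recursion decays no faster than 1/t.**
If `A_{t+1} = A_t (1 − 4η A_t)` for `t ≥ T2`, with `A_{T2} ≥ 0` and `η A_{T2} ≤ 1/8`,
then `η t A_t ≥ min(η T2 A_{T2}, 1/16)` for all `t ≥ T2`. -/
theorem logistic_recursion_lower_bound
    (η : ℝ) (T2 : ℕ) (A : ℕ → ℝ)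
    (hη : 0 < η) (hT2 : 0 < T2)
    (hrec : ∀ t : ℕ, T2 ≤ t → A (t + 1) = A t * (1 - 4 * η * A t))
    (h0 : 0 ≤ A T2) (h1 : η * A T2 ≤ 1 / 8) :
    ∀ t : ℕ, T2 ≤ t →
      min (η * T2 * A T2) (1 / 16) ≤ η * t * A t := by
  obtain ⟨m, hm⟩ : ∃ m, m = min (η * T2 * A T2) (1 / 16) := ⟨_, rfl⟩
  have hm0 : 0 ≤ m := by rw [hm]; exact le_min (by positivity) (by norm_num)
  have hm1 : m ≤ 1 / 16 := hm ▸ min_le_right _ _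
  rw [← hm]
  -- The interval `[0, 1/8]` is invariant, which has to be carried along the induction.
  suffices H : ∀ t : ℕ, T2 ≤ t →
      0 ≤ η * A t ∧ η * A t ≤ 1 / 8 ∧ m ≤ t * (η * A t) by
    intro t ht
    linarith [(H t ht).2.2]
  intro t ht
  induction t, ht using Nat.le_induction with
  | base =>
    refine ⟨by positivity, h1, ?_⟩
    have : m ≤ η * T2 * A T2 := hm ▸ min_le_left _ _
    linarith
  | succ t ht ih =>
    obtain ⟨hx0, hx1, hx⟩ := ih
    have ht1 : (1 : ℝ) ≤ t := by exact_mod_cast hT2.trans_le ht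
    have hstep : η * A (t + 1) = η * A t * (1 - 4 * (η * A t)) := by
      rw [hrec t ht]; ring
    rw [hstep]
    refine ⟨mul_nonneg hx0 (by linarith), by nlinarith, ?_⟩
    push_cast
    exact logistic_step hm0 hm1 ht1 hx1 hx
end

section
/- There exists a universal constant c1 > 0 such that the following holds. Let n > r ≥ 1, k = r + 1 ≤ n, 0 ≤ η ≤ 1/6 and 0 < α ≤ 1. Let Σ = diag(σ1, …, σn) ∈ ℝ^{n×n} with σ_i = 1 for i ≤ r and σ_i = 0 for i > r. Let F0, G0 ∈ ℝ^{n×k} be defined by (F0)_{ii} = α for 1 ≤ i ≤ k, (G0)_{ii} = α for 1 ≤ i ≤ r, (G0)_{r+1,r+1} = α/3, and all other entries zero, and iterate F_{t+1} = F_t − η(F_tG_tᵀ − Σ)G_t, G_{t+1} = G_t − η(F_tG_tᵀ − Σ)ᵀF_t. Then with T1 = c1·log(1/α)/η, for all t ≥ T1: (α⁴/36)·(1 − 4ηα²)^{2t} ≤ ‖F_tG_tᵀ − Σ‖_F² ≤ 4n·(1 − ηα²/4)^{t − T1}. -/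
/-!
The initialization is diagonal, and gradient descent preserves this shape: with
`e = 1 - a²`, the whole trajectory is described by three scalars,
`a ← a + η a e` (the first `r` diagonal entries of both factors),
`b ← b - η b c²` and `c ← c - η c b²` (the last diagonal entries of `F` and `G`),
and the squared error equals `r (1 - a²)² + (b c)²`.

* The odds `a² / (1 - a²)` grow by a factor at least `1 + 2η ≥ exp η` per step, so
  `1 - a_t² ≤ α⁻² exp (-η t)`. This is the fast part: its prefactor is absorbed by the
  burn-in `T1 = 2 log (1/α) / η`, hence `c1 = 2`.
* The ratio `c / b` stays at most `1/3`, and therefore `b - c/3` never decreases. Hence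
  `α/2 ≤ b ≤ α` for all time, so that `c` decays geometrically with a rate of order `η α²`,
  from above and from below. The product `b c` gives both bounds of the theorem.
-/

open Matrix Real

/-- Squared Frobenius norm of a real matrix. -/
noncomputable def frobSq {m n : ℕ} (M : Matrix (Fin m) (Fin n) ℝ) : ℝ :=
  ∑ i, ∑ j, (M i j) ^ 2

/-- The `n × (r + 1)` matrix whose only nonzero entries are on the diagonal, the first `r` of
them being `p` and the last one `q`. -/
def diagRect (n r : ℕ) (p q : ℝ) : Matrix (Fin n) (Fin (r + 1)) ℝ :=
  Matrix.of (fun i j => if (i : ℕ) = (j : ℕ) then (if (j : ℕ) < r then p else q) else 0)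

lemma diagRect_residual (n r : ℕ) (a b c : ℝ) :
    diagRect n r a b * (diagRect n r a c)ᵀ -
      Matrix.diagonal (fun i : Fin n => if (i : ℕ) < r then (1 : ℝ) else 0) =
    Matrix.diagonal (fun i : Fin n =>
      if (i : ℕ) < r then a ^ 2 - 1 else if (i : ℕ) = r then b * c else 0) := by
  ext i i'
  simp only [Matrix.sub_apply, Matrix.mul_apply, Matrix.transpose_apply, diagRect,
    Matrix.of_apply, Matrix.diagonal_apply]
  by_cases hi : (i : ℕ) < r + 1
  · rw [Finset.sum_eq_single (⟨i, hi⟩ : Fin (r + 1))]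
    · by_cases h : i = i'
      · subst h
        simp only [if_true]
        split_ifs
        · ring
        · ring
        · omega
      · have h' : ¬ ((i' : ℕ) = (i : ℕ)) := fun h2 => h (Fin.ext h2.symm)
        simp [h, h']
    · intro j _ hj
      have : ¬ ((i : ℕ) = (j : ℕ)) := fun h2 => hj (Fin.ext h2.symm)
      simp [this]
    · simp
  · rw [Finset.sum_eq_zero]
    · have h1 : ¬ ((i : ℕ) < r) := by omega
      have h2 : ¬ ((i : ℕ) = r) := by omega
      simp [h1, h2]
    · intro j _
      have : ¬ ((i : ℕ) = (j : ℕ)) := by omega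
      simp [this]

lemma frobSq_residual (n r : ℕ) (hr : r < n) (x y : ℝ) :
    frobSq (Matrix.diagonal (fun i : Fin n =>
      if (i : ℕ) < r then x else if (i : ℕ) = r then y else 0)) = r * x ^ 2 + y ^ 2 := by
  have h1 : ∀ i : Fin n, ∑ j, (Matrix.diagonal (fun i : Fin n =>
      if (i : ℕ) < r then x else if (i : ℕ) = r then y else 0) i j) ^ 2 =
      (fun k : ℕ => if k < r then x ^ 2 else if k = r then y ^ 2 else 0) (i : ℕ) := by
    intro i
    rw [Finset.sum_eq_single i]
    · simp only [Matrix.diagonal_apply_eq]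
      split_ifs <;> simp
    · intro j _ hj
      simp [Matrix.diagonal_apply_ne' _ hj]
    · simp
  obtain ⟨m, rfl⟩ : ∃ m, n = r + 1 + m := ⟨n - (r + 1), by omega⟩
  rw [frobSq, Finset.sum_congr rfl (fun i _ => h1 i),
    Fin.sum_univ_eq_sum_range (fun k : ℕ => if k < r then x ^ 2 else if k = r then y ^ 2 else 0),
    Finset.sum_range_add, Finset.sum_range_succ]
  have h2 : ∑ k ∈ Finset.range r, (if k < r then x ^ 2 else if k = r then y ^ 2 else 0) =
      r * x ^ 2 := by
    rw [Finset.sum_congr rfl (fun k hk => if_pos (Finset.mem_range.1 hk))]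
    simp
  have h3 : ∑ k ∈ Finset.range m, (if r + 1 + k < r then x ^ 2 else
      if r + 1 + k = r then y ^ 2 else 0) = 0 := by
    refine Finset.sum_eq_zero fun k _ => ?_
    rw [if_neg (by omega), if_neg (by omega)]
  rw [h2, h3]
  simp

/-- The scalars `(a, b, c)` driving gradient descent: `a` is the common value of the first `r`
diagonal entries of both factors, `b` and `c` are the last diagonal entries of `F` and `G`. -/
noncomputable def scalarIter (η α : ℝ) : ℕ → ℝ × ℝ × ℝ
  | 0 => (α, α, α / 3)
  | t + 1 =>
    let s := scalarIter η α t
    (s.1 + η * s.1 * (1 - s.1 ^ 2), s.2.1 - η * s.2.1 * s.2.2 ^ 2,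
      s.2.2 - η * s.2.2 * s.2.1 ^ 2)

/-- Gradient descent stays on the diagonal matrices and acts there by `scalarIter`. -/
lemma iterates_eq_diagRect (n r : ℕ) (η α : ℝ) (F G : ℕ → Matrix (Fin n) (Fin (r + 1)) ℝ)
    (hF0 : F 0 = Matrix.of (fun (i : Fin n) (j : Fin (r + 1)) =>
      if (i : ℕ) = (j : ℕ) then α else 0))
    (hG0 : G 0 = Matrix.of (fun (i : Fin n) (j : Fin (r + 1)) =>
      if (i : ℕ) = (j : ℕ) then (if (j : ℕ) < r then α else α / 3) else 0))
    (hF : ∀ t, F (t + 1) = F t - η •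
      ((F t * (G t)ᵀ -
        Matrix.diagonal (fun i : Fin n => if (i : ℕ) < r then (1 : ℝ) else 0)) * G t))
    (hG : ∀ t, G (t + 1) = G t - η •
      ((F t * (G t)ᵀ -
        Matrix.diagonal (fun i : Fin n => if (i : ℕ) < r then (1 : ℝ) else 0))ᵀ * F t))
    (t : ℕ) :
    F t = diagRect n r (scalarIter η α t).1 (scalarIter η α t).2.1 ∧
      G t = diagRect n r (scalarIter η α t).1 (scalarIter η α t).2.2 := by
  induction t with
  | zero =>
    refine ⟨?_, ?_⟩
    · rw [hF0]; ext i j; simp [diagRect, scalarIter]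
    · rw [hG0]; ext i j; simp [diagRect, scalarIter]
  | succ t ih =>
    obtain ⟨h1, h2⟩ := ih
    rw [hF, hG, h1, h2, diagRect_residual, Matrix.diagonal_transpose]
    constructor
    all_goals
      ext i j
      simp only [scalarIter, diagRect, Matrix.sub_apply, Matrix.smul_apply,
        Matrix.diagonal_mul, Matrix.of_apply, smul_eq_mul]
      have := j.2
      split_ifs <;> first | omega | ring

/-- The second bound says that the odds `a² / (1 - a²)` grow at least like `α² (1 + 2η)ᵗ`. It
is stated without division because `a = 1` is possible. -/
lemma scalarIter_a (η α : ℝ) (hη : 0 ≤ η) (hη' : η ≤ 1 / 6) (hα : 0 < α) (hα' : α ≤ 1) (t : ℕ) :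
    (0 < (scalarIter η α t).1 ∧ (scalarIter η α t).1 ≤ 1) ∧
      α ^ 2 * (1 + 2 * η) ^ t * (1 - (scalarIter η α t).1 ^ 2) ≤ (scalarIter η α t).1 ^ 2 := by
  induction t with
  | zero =>
    simp only [scalarIter]
    refine ⟨⟨hα, hα'⟩, ?_⟩
    have := sq_nonneg (α ^ 2)
    nlinarith
  | succ t ih =>
    simp only [scalarIter]
    generalize (scalarIter η α t).1 = a at ih ⊢
    obtain ⟨⟨h0, h1⟩, h2⟩ := ih
    have ha2 : a ^ 2 ≤ 1 := by nlinarith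
    have he : 0 ≤ 1 - a ^ 2 := by linarith
    have hηe : 0 ≤ η * (1 - a ^ 2) := mul_nonneg hη he
    refine ⟨⟨by nlinarith [mul_nonneg h0.le hηe], ?_⟩, ?_⟩
    · have h3 : η * (a * (1 + a)) ≤ 1 := by nlinarith [mul_nonneg hη h0.le]
      nlinarith [mul_nonneg (sub_nonneg.2 h1) (sub_nonneg.2 h3)]
    · have hP : 0 ≤ α ^ 2 * (1 + 2 * η) ^ t := by positivity
      set P := α ^ 2 * (1 + 2 * η) ^ t with hPdef
      -- The error contracts by at least `1 - 2ηa²`.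
      have h4 : 1 - (a + η * a * (1 - a ^ 2)) ^ 2 ≤ (1 - a ^ 2) * (1 - 2 * η * a ^ 2) := by
        nlinarith [sq_nonneg (a * (η * (1 - a ^ 2)))]
      have h5 : (1 + 2 * η) * (1 - 2 * η * a ^ 2) ≤ (1 + η * (1 - a ^ 2)) ^ 2 := by
        nlinarith [sq_nonneg (η * (1 - a ^ 2)), sq_nonneg (η * a)]
      calc α ^ 2 * (1 + 2 * η) ^ (t + 1) * (1 - (a + η * a * (1 - a ^ 2)) ^ 2)
          = P * (1 + 2 * η) * (1 - (a + η * a * (1 - a ^ 2)) ^ 2) := by rw [hPdef]; ring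
        _ ≤ P * (1 + 2 * η) * ((1 - a ^ 2) * (1 - 2 * η * a ^ 2)) := by gcongr
        _ = P * (1 - a ^ 2) * ((1 + 2 * η) * (1 - 2 * η * a ^ 2)) := by ring
        _ ≤ P * (1 - a ^ 2) * (1 + η * (1 - a ^ 2)) ^ 2 := by gcongr
        _ ≤ a ^ 2 * (1 + η * (1 - a ^ 2)) ^ 2 := by gcongr
        _ = _ := by ring

/-- The invariants are `c ≤ b / 3` and the monotonicity of `b - c / 3`: a step lowers `b` by
`η b c²` and `c` by `η b² c`, and the former is at most a third of the latter. -/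
lemma scalarIter_bc (η α : ℝ) (hη : 0 ≤ η) (hη' : η ≤ 1 / 6) (hα : 0 < α) (hα' : α ≤ 1) (t : ℕ) :
    0 ≤ (scalarIter η α t).2.2 ∧ 3 * (scalarIter η α t).2.2 ≤ (scalarIter η α t).2.1 ∧
      (scalarIter η α t).2.1 ≤ α ∧
      8 * α / 9 ≤ (scalarIter η α t).2.1 - (scalarIter η α t).2.2 / 3 := by
  induction t with
  | zero =>
    simp only [scalarIter]
    refine ⟨by linarith, by linarith, le_rfl, by linarith⟩
  | succ t ih =>
    simp only [scalarIter]
    generalize (scalarIter η α t).2.1 = b at ih ⊢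
    generalize (scalarIter η α t).2.2 = c at ih ⊢
    obtain ⟨h0, h1, h2, h3⟩ := ih
    have hb : 0 ≤ b := by linarith
    have hb2 : b ^ 2 ≤ 1 := by nlinarith
    have hηb : η * b ^ 2 ≤ 1 := by nlinarith
    have hbc : 0 ≤ η * (b * c) := by positivity
    have h4 : 0 ≤ η * (b * c) * (b - 3 * c) := mul_nonneg hbc (by linarith)
    have h5 : 0 ≤ η * (b * c) * (3 * b - c) := mul_nonneg hbc (by linarith)
    have h6 : 0 ≤ c * (1 - η * b ^ 2) := mul_nonneg h0 (by linarith)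
    have h7 : 0 ≤ η * b * c ^ 2 := by positivity
    refine ⟨by linarith, by linarith, by linarith, by linarith⟩

/-- The product `b c` decays at a geometric rate of order `η α²`, from both sides. -/
lemma scalarIter_mul (η α : ℝ) (hη : 0 ≤ η) (hη' : η ≤ 1 / 6) (hα : 0 < α) (hα' : α ≤ 1) (t : ℕ) :
    α ^ 2 / 3 * (1 - 4 * η * α ^ 2) ^ t ≤ (scalarIter η α t).2.1 * (scalarIter η α t).2.2 ∧
      (scalarIter η α t).2.1 * (scalarIter η α t).2.2 ≤ (1 - η * α ^ 2 / 4) ^ t := by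
  induction t with
  | zero =>
    simp only [scalarIter]
    constructor <;> nlinarith
  | succ t ih =>
    have hinv := scalarIter_bc η α hη hη' hα hα' t
    simp only [scalarIter]
    generalize (scalarIter η α t).2.1 = b at ih hinv ⊢
    generalize (scalarIter η α t).2.2 = c at ih hinv ⊢
    obtain ⟨h0, h1, h2, h3⟩ := hinv
    have hb : 0 ≤ b := by linarith
    have hbα : b ^ 2 ≤ α ^ 2 := by nlinarith
    have hcα : c ^ 2 ≤ α ^ 2 := by nlinarith
    have hαb : α ^ 2 / 4 ≤ b ^ 2 := by nlinarith
    have hα2 : α ^ 2 ≤ 1 := by nlinarith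
    have hx : η * α ^ 2 ≤ 1 / 6 := by nlinarith [sq_nonneg α]
    have hx0 : 0 ≤ η * α ^ 2 := by positivity
    have hxb : η * b ^ 2 ≤ η * α ^ 2 := by gcongr
    have hxc : η * c ^ 2 ≤ η * α ^ 2 := by gcongr
    have hxb' : η * (α ^ 2 / 4) ≤ η * b ^ 2 := by gcongr
    have hxb0 : 0 ≤ η * b ^ 2 := by positivity
    have hxc0 : 0 ≤ η * c ^ 2 := by positivity
    have hbc : 0 ≤ b * c := by positivity
    have hprod : (b - η * b * c ^ 2) * (c - η * c * b ^ 2) =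
        b * c * ((1 - η * c ^ 2) * (1 - η * b ^ 2)) := by ring
    have hlo : 1 - 4 * η * α ^ 2 ≤ (1 - η * c ^ 2) * (1 - η * b ^ 2) := by
      nlinarith [mul_nonneg hxb0 hxc0]
    have hhi : (1 - η * c ^ 2) * (1 - η * b ^ 2) ≤ 1 - η * α ^ 2 / 4 := by
      nlinarith [mul_nonneg hxc0 (by linarith : 0 ≤ 1 - η * b ^ 2)]
    have hpos : 0 ≤ 1 - 4 * η * α ^ 2 := by linarith
    have hpos' : 0 ≤ 1 - η * α ^ 2 / 4 := by linarith
    rw [hprod, pow_succ _ t, pow_succ _ t, ← mul_assoc]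
    constructor
    · exact mul_le_mul ih.1 hlo hpos hbc
    · exact mul_le_mul ih.2 hhi (hpos.trans hlo) (by positivity)

/-- After the burn-in time `2 log (1/α) / η`, the error in the first `r` directions is below the
slow rate. For `η = 0` the burn-in time is `0` by the convention on division. -/
lemma one_sub_a_sq_le (η α : ℝ) (hη : 0 ≤ η) (hη' : η ≤ 1 / 6) (hα : 0 < α) (hα' : α ≤ 1)
    (t : ℕ) (ht : 2 * Real.log (1 / α) / η ≤ (t : ℝ)) :
    1 - (scalarIter η α t).1 ^ 2 ≤
      (1 - η * α ^ 2 / 4) ^ ((t : ℝ) - 2 * Real.log (1 / α) / η) := by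
  obtain ⟨⟨h0, h1⟩, h2⟩ := scalarIter_a η α hη hη' hα hα' t
  generalize (scalarIter η α t).1 = a at h0 h1 h2 ⊢
  rcases hη.eq_or_lt with rfl | hpos
  · simp
    positivity
  have ha2 : a ^ 2 ≤ 1 := by nlinarith
  set s := (t : ℝ) - 2 * Real.log (1 / α) / η with hs
  have hs0 : 0 ≤ s := by linarith
  have hηs : η * s = η * t - 2 * Real.log (1 / α) := by
    rw [hs]; field_simp
  -- `exp η ≤ 1 / (1 - η) ≤ 1 + 2η`
  have hexp : Real.exp η ≤ 1 + 2 * η := by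
    have h3 : 1 - η ≤ Real.exp (-η) := by linarith [Real.add_one_le_exp (-η)]
    have h4 : Real.exp η * Real.exp (-η) = 1 := by rw [← Real.exp_add]; simp
    have h5 := Real.exp_pos η
    nlinarith
  have hαexp : α ^ 2 = Real.exp (-(2 * Real.log (1 / α))) := by
    rw [one_div, Real.log_inv, mul_neg, neg_neg, two_mul, Real.exp_add, Real.exp_log hα, sq]
  have hgrow : Real.exp (η * s) ≤ α ^ 2 * (1 + 2 * η) ^ t := by
    have : Real.exp (η * s) = α ^ 2 * Real.exp η ^ t := by
      rw [hαexp, ← Real.exp_nat_mul, ← Real.exp_add, hηs]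
      ring_nf
    rw [this]
    gcongr
  have herr : 1 - a ^ 2 ≤ Real.exp (-(η * s)) := by
    have h6 : Real.exp (η * s) * (1 - a ^ 2) ≤ 1 :=
      (mul_le_mul_of_nonneg_right hgrow (by linarith)).trans (h2.trans ha2)
    rw [Real.exp_neg, ← one_div, le_div_iff₀ (Real.exp_pos _)]
    linarith
  have hbase : Real.exp (-η) ≤ 1 - η * α ^ 2 / 4 := by
    have h3 := Real.add_one_le_exp η
    have h4 : Real.exp η * Real.exp (-η) = 1 := by rw [← Real.exp_add]; simp
    have h5 := Real.exp_pos (-η)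
    have h6 : Real.exp (-η) ≤ 1 - η / 4 := by nlinarith
    have hα2 : α ^ 2 ≤ 1 := by nlinarith
    nlinarith
  calc 1 - a ^ 2 ≤ Real.exp (-(η * s)) := herr
    _ = Real.exp (-η) ^ s := by rw [← Real.exp_mul, neg_mul]
    _ ≤ _ := Real.rpow_le_rpow (Real.exp_pos _).le hbase hs0

/-- **Toy asymmetric matrix factorization: tight linear rate depending on `α`.**
For gradient descent on `(1/2)‖FGᵀ − Σ‖_F²` with `k = r+1`, `Σ` having `r` unit singular
values, and the imbalanced diagonal initialization `(F0)_{ii} = α` (`i ≤ k`),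
`(G0)_{ii} = α` (`i ≤ r`), `(G0)_{r+1,r+1} = α/3`, there is a universal constant `c1 > 0`
such that, with `T1 = c1 log(1/α)/η`, for all `t ≥ T1`,
`(α⁴/36)(1 − 4ηα²)^{2t} ≤ ‖F_t G_tᵀ − Σ‖_F² ≤ 4n (1 − ηα²/4)^{t−T1}`. -/
theorem toy_asymmetric_factorization :
    ∃ c1 : ℝ, 0 < c1 ∧
      ∀ (n r : ℕ) (η α : ℝ)
        (F G : ℕ → Matrix (Fin n) (Fin (r + 1)) ℝ),
        1 ≤ r → r < n → r + 1 ≤ n →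
        0 ≤ η → η ≤ 1 / 6 → 0 < α → α ≤ 1 →
        F 0 = Matrix.of (fun (i : Fin n) (j : Fin (r + 1)) => if (i : ℕ) = (j : ℕ) then α else 0) →
        G 0 = Matrix.of (fun (i : Fin n) (j : Fin (r + 1)) =>
          if (i : ℕ) = (j : ℕ) then (if (j : ℕ) < r then α else α / 3) else 0) →
        (∀ t, F (t + 1) = F t - η •
          ((F t * (G t)ᵀ -
            Matrix.diagonal (fun i : Fin n => if (i : ℕ) < r then (1 : ℝ) else 0)) * G t)) →
        (∀ t, G (t + 1) = G t - η •
          ((F t * (G t)ᵀ -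
            Matrix.diagonal (fun i : Fin n => if (i : ℕ) < r then (1 : ℝ) else 0))ᵀ * F t)) →
        ∀ t : ℕ, c1 * Real.log (1 / α) / η ≤ (t : ℝ) →
          α ^ 4 / 36 * (1 - 4 * η * α ^ 2) ^ (2 * t) ≤
            frobSq (F t * (G t)ᵀ -
              Matrix.diagonal (fun i : Fin n => if (i : ℕ) < r then (1 : ℝ) else 0)) ∧
          frobSq (F t * (G t)ᵀ -
              Matrix.diagonal (fun i : Fin n => if (i : ℕ) < r then (1 : ℝ) else 0)) ≤
            4 * n * (1 - η * α ^ 2 / 4) ^ ((t : ℝ) - c1 * Real.log (1 / α) / η) := by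
  refine ⟨2, by norm_num, ?_⟩
  intro n r η α F G _ hrn hrn' hη hη' hα hα' hF0 hG0 hF hG t ht
  obtain ⟨hFt, hGt⟩ := iterates_eq_diagRect n r η α F G hF0 hG0 hF hG t
  rw [hFt, hGt, diagRect_residual, frobSq_residual n r hrn]
  obtain ⟨⟨ha0, ha1⟩, -⟩ := scalarIter_a η α hη hη' hα hα' t
  obtain ⟨hlo, hhi⟩ := scalarIter_mul η α hη hη' hα hα' t
  have hslow := one_sub_a_sq_le η α hη hη' hα hα' t ht
  generalize (scalarIter η α t).1 = a at ha0 ha1 hslow ⊢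
  generalize (scalarIter η α t).2.1 * (scalarIter η α t).2.2 = p at hlo hhi ⊢
  have hα2 : α ^ 2 ≤ 1 := by nlinarith
  have hx : η * α ^ 2 ≤ 1 / 6 := by nlinarith [sq_nonneg α]
  have hx0 : 0 ≤ η * α ^ 2 := by positivity
  have hpos : 0 ≤ 1 - 4 * η * α ^ 2 := by linarith
  have hp : 0 ≤ p := le_trans (by positivity) hlo
  constructor
  · calc α ^ 4 / 36 * (1 - 4 * η * α ^ 2) ^ (2 * t)
        ≤ α ^ 4 / 9 * (1 - 4 * η * α ^ 2) ^ (2 * t) := by gcongr; norm_num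
      _ = (α ^ 2 / 3 * (1 - 4 * η * α ^ 2) ^ t) ^ 2 := by ring
      _ ≤ p ^ 2 := by gcongr
      _ ≤ r * (a ^ 2 - 1) ^ 2 + p ^ 2 := le_add_of_nonneg_left (by positivity)
  · set P := (1 - η * α ^ 2 / 4) ^ ((t : ℝ) - 2 * Real.log (1 / α) / η) with hP
    have hT : 0 ≤ 2 * Real.log (1 / α) / η := by
      have : 0 ≤ Real.log (1 / α) := Real.log_nonneg (by rw [le_div_iff₀ hα]; linarith)
      positivity
    have hbase : 0 < 1 - η * α ^ 2 / 4 := by linarith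
    have hpP : p ≤ P := by
      rw [← Real.rpow_natCast] at hhi
      exact hhi.trans (Real.rpow_le_rpow_of_exponent_ge hbase (by linarith) (by linarith))
    have hp1 : p ≤ 1 := by
      exact hhi.trans (pow_le_one₀ hbase.le (by linarith))
    have hp2 : p ^ 2 ≤ P := by nlinarith
    have ha2 : a ^ 2 ≤ 1 := by nlinarith
    have he : (a ^ 2 - 1) ^ 2 ≤ P := by nlinarith [sq_nonneg a]
    have hPn : 0 ≤ P := by positivity
    have hn : (r : ℝ) + 1 ≤ n := by exact_mod_cast hrn'
    calc (r : ℝ) * (a ^ 2 - 1) ^ 2 + p ^ 2 ≤ r * P + P := by gcongr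
      _ = (r + 1) * P := by ring
      _ ≤ n * P := by gcongr
      _ ≤ 4 * n * P := by nlinarith [mul_nonneg (Nat.cast_nonneg (α := ℝ) n) hPn]
end

section
/- In the toy asymmetric factorization setting (k = r + 1 ≤ n, Σ = diag with σ_i = 1 for i ≤ r and 0 otherwise, F0 and G0 diagonal with (F0)_{ii} = α for i ≤ k, (G0)_{ii} = α for i ≤ r, (G0)_{r+1,r+1} = α/3, other entries zero, and updates F_{t+1} = F_t − η(F_tG_tᵀ − Σ)G_t, G_{t+1} = G_t − η(F_tG_tᵀ − Σ)ᵀF_t), define scalar sequences a_0 = α, b_0 = α/3, α_0 = α, a_{t+1} = a_t − η·a_t·b_t², b_{t+1} = b_t − η·a_t²·b_t, α_{t+1} = α_t·(1 + η − η·α_t²). Let U_t, V_t ∈ ℝ^{r×k} be the first r rows of F_t, G_t respectively, J_t, K_t ∈ ℝ^{(n−r)×k} the last n − r rows, and A ∈ ℝ^{(n−r)×k} the matrix with A_{1k} = 1 and all other entries zero. Then for every t ≥ 0: U_t = V_t = (α_t·I_r, 0), U_tK_tᵀ = 0, J_tV_tᵀ = 0, J_t = a_t·A, and K_t = b_t·A.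 -/
/-!
A rectangular diagonal shape is preserved by gradient descent: if `F` and `G` are diagonal with
entries `f` and `g`, then `F Gᵀ - Σ` is a square diagonal matrix, so the updates are again
diagonal and act entrywise by `f ↦ f - η (f g - σ) g` and `g ↦ g - η (f g - σ) f`
(`rectDiag_residual`). On the indices `i < r`, where `σ = 1` and `f = g = α_t`, this is
the recursion of `α_t`; on the index `i = r`, where `σ = 0`, it is the coupled recursion of
`a_t` and `b_t`. Hence `F_t` and `G_t` stay diagonal with entries `α_t, …, α_t, a_t` and
`α_t, …, α_t, b_t`, and all the invariants are read off from this shape.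
-/

open Matrix

/-- The `n × k` matrix with `(i, i)` entry `c i` and zeros elsewhere; `c` is indexed by `ℕ` so that
the same sequence can be read along rows and along columns. -/
def rectDiag (n k : ℕ) (c : ℕ → ℝ) : Matrix (Fin n) (Fin k) ℝ :=
  Matrix.of fun i j => if (i : ℕ) = (j : ℕ) then c j else 0

theorem rectDiag_apply (n k : ℕ) (c : ℕ → ℝ) (i : Fin n) (j : Fin k) :
    rectDiag n k c i j = if (i : ℕ) = (j : ℕ) then c j else 0 := rfl

theorem rectDiag_mul_transpose (n k : ℕ) (f g : ℕ → ℝ) :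
    rectDiag n k f * (rectDiag n k g)ᵀ =
      Matrix.diagonal (fun i : Fin n => if (i : ℕ) < k then f i * g i else 0) := by
  ext i i'
  rw [Matrix.mul_apply, Matrix.diagonal_apply]
  simp only [Matrix.transpose_apply, rectDiag_apply]
  by_cases hi : (i : ℕ) < k
  · rw [Finset.sum_eq_single (⟨i, hi⟩ : Fin k)]
    · by_cases h : i = i'
      · subst h
        simp [hi]
      · have h' : ¬ (i' : ℕ) = (i : ℕ) := fun e => h (Fin.ext e.symm)
        simp [h, h']
    · intro j _ hj
      have : ¬ (i : ℕ) = (j : ℕ) := fun e => hj (Fin.ext e.symm)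
      simp [this]
    · simp
  · have hne : ∀ j : Fin k, ¬ (i : ℕ) = (j : ℕ) := fun j e => hi (e ▸ j.isLt)
    simp [hi, hne]

/-- The product of the residual `F Gᵀ - Σ` with a factor, for rectangular diagonal matrices; the
update of `F` takes `h = g`, and that of `G` takes `h = f` with the (symmetric) residual transposed. -/
theorem rectDiag_residual (n k : ℕ) (f g h s : ℕ → ℝ) :
    (rectDiag n k f * (rectDiag n k g)ᵀ - Matrix.diagonal (fun i : Fin n => s i)) *
      rectDiag n k h = rectDiag n k (fun i => (f i * g i - s i) * h i) := by
  ext i j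
  rw [rectDiag_mul_transpose, Matrix.diagonal_sub, Matrix.diagonal_mul]
  simp only [rectDiag_apply]
  by_cases hij : (i : ℕ) = (j : ℕ)
  · simp [hij]
  · simp [hij]

theorem rectDiag_residual_transpose (n k : ℕ) (f g h s : ℕ → ℝ) :
    (rectDiag n k f * (rectDiag n k g)ᵀ - Matrix.diagonal (fun i : Fin n => s i))ᵀ *
      rectDiag n k h = rectDiag n k (fun i => (f i * g i - s i) * h i) := by
  rw [← rectDiag_residual, rectDiag_mul_transpose, Matrix.diagonal_sub,
    Matrix.diagonal_transpose]

/-- **Invariants of the toy asymmetric factorization dynamics.**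
In the toy setting (`k = r+1`, `Σ` with `r` unit singular values, imbalanced diagonal
initialization), writing `U_t, V_t` for the first `r` rows of `F_t, G_t` and
`J_t, K_t` for the last `n − r` rows, the gradient descent iterates satisfy for all `t`:
`U_t = V_t = (α_t I_r, 0)`, `U_t K_tᵀ = 0`, `J_t V_tᵀ = 0`, `J_t = a_t A`, `K_t = b_t A`,
where `A` has a single 1 in position `(1, k)` and `a_t, b_t, α_t` follow the scalar
recursions `a_{t+1} = a_t − η a_t b_t²`, `b_{t+1} = b_t − η a_t² b_t`,
`α_{t+1} = α_t (1 + η − η α_t²)` from `a_0 = α, b_0 = α/3, α_0 = α`. -/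
theorem toy_asymmetric_invariants
    (n r : ℕ) (η α : ℝ)
    (F G : ℕ → Matrix (Fin n) (Fin (r + 1)) ℝ)
    (a b αs : ℕ → ℝ)
    (hr : 1 ≤ r) (hrn : r + 1 ≤ n)
    (hη0 : 0 ≤ η) (hη : η ≤ 1 / 6) (hα0 : 0 < α) (hα : α ≤ 1)
    (hF0 : F 0 = Matrix.of (fun (i : Fin n) (j : Fin (r + 1)) =>
      if (i : ℕ) = (j : ℕ) then α else 0))
    (hG0 : G 0 = Matrix.of (fun (i : Fin n) (j : Fin (r + 1)) =>
      if (i : ℕ) = (j : ℕ) then (if (j : ℕ) < r then α else α / 3) else 0))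
    (hFrec : ∀ t, F (t + 1) = F t - η •
      ((F t * (G t)ᵀ -
        Matrix.diagonal (fun i : Fin n => if (i : ℕ) < r then (1 : ℝ) else 0)) * G t))
    (hGrec : ∀ t, G (t + 1) = G t - η •
      ((F t * (G t)ᵀ -
        Matrix.diagonal (fun i : Fin n => if (i : ℕ) < r then (1 : ℝ) else 0))ᵀ * F t))
    (ha0 : a 0 = α) (hb0 : b 0 = α / 3) (hαs0 : αs 0 = α)
    (harec : ∀ t, a (t + 1) = a t - η * a t * (b t) ^ 2)
    (hbrec : ∀ t, b (t + 1) = b t - η * (a t) ^ 2 * b t)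
    (hαsrec : ∀ t, αs (t + 1) = αs t * (1 + η - η * (αs t) ^ 2)) :
    ∀ t : ℕ,
      -- U_t = V_t = (α_t I_r, 0)
      (∀ i : Fin n, (i : ℕ) < r → ∀ j : Fin (r + 1),
        F t i j = (if (j : ℕ) = (i : ℕ) then αs t else 0) ∧
        G t i j = (if (j : ℕ) = (i : ℕ) then αs t else 0)) ∧
      -- J_t = a_t A and K_t = b_t A, with A_{1k} = 1 the only nonzero entry
      (∀ i : Fin n, r ≤ (i : ℕ) → ∀ j : Fin (r + 1),
        F t i j = (if (i : ℕ) = r ∧ (j : ℕ) = r then a t else 0) ∧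
        G t i j = (if (i : ℕ) = r ∧ (j : ℕ) = r then b t else 0)) ∧
      -- U_t K_tᵀ = 0 and J_t V_tᵀ = 0
      (∀ i i' : Fin n, (i : ℕ) < r → r ≤ (i' : ℕ) →
        (∑ j, F t i j * G t i' j) = 0 ∧ (∑ j, F t i' j * G t i j) = 0) := by
  have key : ∀ t, F t = rectDiag n (r + 1) (fun i => if i < r then αs t else a t) ∧
      G t = rectDiag n (r + 1) (fun i => if i < r then αs t else b t) := by
    intro t
    induction t with
    | zero =>
      constructor
      · rw [hF0, ha0, hαs0]
        ext i j
        simp [rectDiag_apply]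
      · rw [hG0, hb0, hαs0]
        rfl
    | succ t ih =>
      obtain ⟨hF, hG⟩ := ih
      constructor
      · rw [hFrec, hF, hG, rectDiag_residual n (r + 1) _ _ _ (fun i => if i < r then 1 else 0),
          harec, hαsrec]
        ext i j
        simp only [Matrix.sub_apply, Matrix.smul_apply, rectDiag_apply, smul_eq_mul]
        split_ifs <;> ring
      · rw [hGrec, hF, hG,
          rectDiag_residual_transpose n (r + 1) _ _ _ (fun i => if i < r then 1 else 0),
          hbrec, hαsrec]
        ext i j
        simp only [Matrix.sub_apply, Matrix.smul_apply, rectDiag_apply, smul_eq_mul]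
        split_ifs <;> ring
  intro t
  obtain ⟨hF, hG⟩ := key t
  rw [hF, hG]
  simp only [rectDiag_apply]
  refine ⟨fun i hi j => ?_, fun i hi j => ?_, fun i i' hi hi' => ⟨?_, ?_⟩⟩
  · constructor <;> split_ifs <;> first | rfl | omega
  · have hj := j.isLt
    constructor <;> split_ifs <;> first | rfl | omega
  -- Distinct rows of rectangular diagonal matrices have disjoint supports.
  · refine Finset.sum_eq_zero fun j _ => ?_
    by_cases h : (i : ℕ) = (j : ℕ)
    · rw [if_neg (show ¬ (i' : ℕ) = (j : ℕ) by omega), mul_zero]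
    · rw [if_neg h, zero_mul]
  · refine Finset.sum_eq_zero fun j _ => ?_
    by_cases h : (i : ℕ) = (j : ℕ)
    · rw [if_neg (show ¬ (i' : ℕ) = (j : ℕ) by omega), zero_mul]
    · rw [if_neg h, mul_zero]
end

section
/- Let 0 < η ≤ 1/6 and 0 < α ≤ 1, and define scalar sequences a_0 = α, b_0 = α/3, α_0 = α, with a_{t+1} = a_t − η·a_t·b_t², b_{t+1} = b_t − η·a_t²·b_t, and α_{t+1} = α_t·(1 + η − η·α_t²). Then: (i) for all t ≥ 0, α/2 ≤ a_t ≤ α; (ii) for all t ≥ 0, (α/3)·(1 − 4ηα²)^t ≤ b_t ≤ (α/3)·(1 − ηα²/4)^{t/2}; and (iii) there exists a universal constant c1 > 0 such that, with T1 = c1·log(1/α)/η, for all t ≥ T1, |α_t − 1| ≤ (1 − η/2)^{t − T1}. -/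
open Real

/-!
The three parts rest on one-step invariants.

* For `a` and `b`, the ratio `b / a` never increases as long as `b ≤ a`, so `3 b ≤ a` persists.
  Since `a_{t+1} - a_t = (b_t / a_t) (b_{t+1} - b_t)`, the total loss of `a` is at most a third of
  the total loss of `b`: the quantity `a - b / 3` never decreases, hence `a ≥ 8 α / 9 ≥ α / 2`
  throughout (`factors_invariant`). The bounds on `b` follow by comparing each factor
  `1 - η a_t²` with `1 - 4 η α²` and `1 - η α² / 4` (`minor_factor_bounds`).
* For the signal `x`, both the growth phase and the local convergence phase are captured by the
  single potential `(1 - x) / x`, which contracts by `1 - η / 2` at every step, whatever the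
  value of `x ∈ (0, 1]` (`signal_invariant`). Its initial value is at most `1 / α`, and
  `(1 - η / 2) ^ (-2 log (1 / α) / η) ≥ 1 / α` because `log (1 - η / 2) ≤ -η / 2`
  (`inv_le_rpow_shift`). Hence `c1 = 2` works.
-/

/-- The quantity `a - b / 3` is nondecreasing, which keeps `a` above `8 α / 9`. -/
lemma factors_invariant {η α : ℝ} {a b : ℕ → ℝ} (hη : 0 < η) (hη' : η ≤ 1 / 6)
    (hα : 0 < α) (hα' : α ≤ 1) (ha0 : a 0 = α) (hb0 : b 0 = α / 3)
    (ha : ∀ t, a (t + 1) = a t - η * a t * (b t) ^ 2)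
    (hb : ∀ t, b (t + 1) = b t - η * (a t) ^ 2 * b t) (t : ℕ) :
    0 ≤ b t ∧ 3 * b t ≤ a t ∧ a t ≤ α ∧ 8 * α / 9 ≤ a t - b t / 3 := by
  induction t with
  | zero => rw [ha0, hb0]; refine ⟨?_, ?_, ?_, ?_⟩ <;> linarith
  | succ t ih =>
    obtain ⟨h0, h3, hle, hdiff⟩ := ih
    have hapos : 0 ≤ a t := by linarith
    have ha1 : a t ^ 2 ≤ 1 := pow_le_one₀ hapos (hle.trans hα')
    have hηa : 0 ≤ 1 - η * a t ^ 2 := by nlinarith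
    have hba : b t ^ 2 ≤ a t ^ 2 := pow_le_pow_left₀ h0 (by linarith) 2
    rw [ha, hb]
    refine ⟨?_, ?_, ?_, ?_⟩
    · have := mul_nonneg h0 hηa
      linarith
    · have h1 : 3 * b t * (1 - η * a t ^ 2) ≤ a t * (1 - η * a t ^ 2) :=
        mul_le_mul_of_nonneg_right h3 hηa
      have h2 : a t * (η * b t ^ 2) ≤ a t * (η * a t ^ 2) := by gcongr
      linarith
    · have : 0 ≤ η * a t * b t ^ 2 := by positivity
      linarith
    · have : 0 ≤ η * a t * b t * (a t / 3 - b t) :=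
        mul_nonneg (by positivity) (by linarith)
      linarith

lemma minor_factor_bounds {η α : ℝ} {a b : ℕ → ℝ} (hη : 0 < η) (hη' : η ≤ 1 / 6)
    (hα : 0 < α) (hα' : α ≤ 1) (hb0 : b 0 = α / 3)
    (hb : ∀ t, b (t + 1) = b t - η * (a t) ^ 2 * b t)
    (hbpos : ∀ t, 0 ≤ b t) (ha : ∀ t, α / 2 ≤ a t ∧ a t ≤ α) (t : ℕ) :
    (α / 3) * (1 - 4 * η * α ^ 2) ^ t ≤ b t ∧
      b t ≤ (α / 3) * (1 - η * α ^ 2 / 4) ^ t := by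
  have hα2 : α ^ 2 ≤ 1 := pow_le_one₀ hα.le hα'
  have hlow : 0 ≤ 1 - 4 * η * α ^ 2 := by nlinarith
  have hup : 0 ≤ 1 - η * α ^ 2 / 4 := by nlinarith
  induction t with
  | zero => simp [hb0]
  | succ t ih =>
    obtain ⟨h1, h2⟩ := ih
    have hsq1 : α ^ 2 / 4 ≤ a t ^ 2 := by nlinarith [ha t]
    have hsq2 : a t ^ 2 ≤ α ^ 2 :=
      pow_le_pow_left₀ (by linarith [(ha t).1]) (ha t).2 2
    have e : b (t + 1) = b t * (1 - η * a t ^ 2) := by rw [hb]; ring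
    rw [e, pow_succ _ t, pow_succ _ t, ← mul_assoc, ← mul_assoc]
    constructor
    · refine (mul_le_mul_of_nonneg_right h1 hlow).trans
        (mul_le_mul_of_nonneg_left ?_ (hbpos t))
      nlinarith
    · refine le_trans (mul_le_mul_of_nonneg_left ?_ (hbpos t))
        (mul_le_mul_of_nonneg_right h2 hup)
      nlinarith

/-- Contraction of the potential `(1 - x) / x`, with denominators cleared. -/
lemma signal_invariant {η α : ℝ} {x : ℕ → ℝ} (hη : 0 < η) (hη' : η ≤ 1 / 6)
    (hα : 0 < α) (hα' : α ≤ 1) (hx0 : x 0 = α)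
    (hx : ∀ t, x (t + 1) = x t * (1 + η - η * (x t) ^ 2)) (t : ℕ) :
    0 < x t ∧ x t ≤ 1 ∧ (1 - x t) * α ≤ (1 - η / 2) ^ t * x t := by
  induction t with
  | zero => rw [hx0]; refine ⟨hα, hα', ?_⟩; nlinarith
  | succ t ih =>
    obtain ⟨h0, h1, h2⟩ := ih
    have hsq : x t ^ 2 ≤ 1 := pow_le_one₀ h0.le h1
    have hgrow : 0 < 1 + η - η * x t ^ 2 := by nlinarith
    have hshrink : 0 ≤ 1 - η * x t * (1 + x t) := by nlinarith
    have e : 1 - x (t + 1) = (1 - x t) * (1 - η * x t * (1 + x t)) := by rw [hx]; ring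
    refine ⟨by rw [hx]; positivity, ?_, ?_⟩
    · have := mul_nonneg (sub_nonneg.2 h1) hshrink
      linarith
    · have hfac : 1 - η * x t * (1 + x t) ≤ (1 - η / 2) * (1 + η - η * x t ^ 2) := by
        have p1 : 0 ≤ η * (1 / 2 - η / 2) := mul_nonneg hη.le (by linarith)
        have p2 : 0 ≤ η * x t := by positivity
        have p3 : 0 ≤ η ^ 2 * x t ^ 2 := by positivity
        linarith
      have hq : 0 ≤ (1 - η / 2) ^ t * x t := mul_nonneg (pow_nonneg (by linarith) t) h0.le
      calc (1 - x (t + 1)) * α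
          = ((1 - x t) * α) * (1 - η * x t * (1 + x t)) := by rw [e]; ring
        _ ≤ ((1 - η / 2) ^ t * x t) * (1 - η * x t * (1 + x t)) :=
            mul_le_mul_of_nonneg_right h2 hshrink
        _ ≤ ((1 - η / 2) ^ t * x t) * ((1 - η / 2) * (1 + η - η * x t ^ 2)) :=
            mul_le_mul_of_nonneg_left hfac hq
        _ = (1 - η / 2) ^ (t + 1) * x (t + 1) := by rw [hx]; ring

/-- Starting the clock at `2 log (1 / α) / η` absorbs the initial factor `1 / α`. -/
lemma inv_le_rpow_shift {η α : ℝ} (hη : 0 < η) (hη' : η ≤ 1 / 6)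
    (hα : 0 < α) (hα' : α ≤ 1) (t : ℕ) :
    (1 - η / 2) ^ t / α ≤ (1 - η / 2) ^ ((t : ℝ) - 2 * Real.log (1 / α) / η) := by
  have hq : 0 < 1 - η / 2 := by linarith
  have hL : 0 ≤ Real.log (1 / α) := Real.log_nonneg (by rwa [le_div_iff₀ hα, one_mul])
  rw [sub_eq_add_neg (t : ℝ), Real.rpow_add hq, Real.rpow_natCast, div_eq_mul_one_div]
  refine mul_le_mul_of_nonneg_left ?_ (pow_nonneg hq.le t)
  rw [Real.rpow_def_of_pos hq, ← Real.log_le_iff_le_exp (by positivity)]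
  have hlog : Real.log (1 - η / 2) ≤ -(η / 2) := by
    linarith [Real.log_le_sub_one_of_pos hq]
  have hT : 0 ≤ 2 * Real.log (1 / α) / η := by positivity
  calc Real.log (1 / α) = (η / 2) * (2 * Real.log (1 / α) / η) := by field_simp
    _ ≤ (-Real.log (1 - η / 2)) * (2 * Real.log (1 / α) / η) :=
        mul_le_mul_of_nonneg_right (by linarith) hT
    _ = Real.log (1 - η / 2) * -(2 * Real.log (1 / α) / η) := by ring

/-- **Scalar dynamics of the toy asymmetric factorization.**
For the scalar recursions `a_{t+1} = a_t − η a_t b_t²`, `b_{t+1} = b_t − η a_t² b_t`,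
`α_{t+1} = α_t (1 + η − η α_t²)` started from `a_0 = α`, `b_0 = α/3`, `α_0 = α` with
`0 < η ≤ 1/6` and `0 < α ≤ 1`: `a_t` stays in `[α/2, α]`, `b_t` is squeezed between
`(α/3)(1 − 4ηα²)^t` and `(α/3)(1 − ηα²/4)^{t/2}`, and `α_t` converges to `1` at a linear
rate after `T1 = c1 log(1/α)/η` rounds for a universal constant `c1`. -/
theorem toy_scalar_dynamics :
    ∃ c1 : ℝ, 0 < c1 ∧
      ∀ (η α : ℝ) (a b αs : ℕ → ℝ),
        0 < η → η ≤ 1 / 6 → 0 < α → α ≤ 1 →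
        a 0 = α → b 0 = α / 3 → αs 0 = α →
        (∀ t, a (t + 1) = a t - η * a t * (b t) ^ 2) →
        (∀ t, b (t + 1) = b t - η * (a t) ^ 2 * b t) →
        (∀ t, αs (t + 1) = αs t * (1 + η - η * (αs t) ^ 2)) →
        (∀ t : ℕ, α / 2 ≤ a t ∧ a t ≤ α) ∧
        (∀ t : ℕ,
          (α / 3) * (1 - 4 * η * α ^ 2) ^ t ≤ b t ∧
          b t ≤ (α / 3) * (1 - η * α ^ 2 / 4) ^ ((t : ℝ) / 2)) ∧
        (∀ t : ℕ, c1 * Real.log (1 / α) / η ≤ (t : ℝ) →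
          |αs t - 1| ≤ (1 - η / 2) ^ ((t : ℝ) - c1 * Real.log (1 / α) / η)) := by
  refine ⟨2, two_pos, ?_⟩
  intro η α a b αs hη hη' hα hα' ha0 hb0 hx0 ha hb hx
  have inv := factors_invariant hη hη' hα hα' ha0 hb0 ha hb
  have hab : ∀ t : ℕ, α / 2 ≤ a t ∧ a t ≤ α := fun t => by
    obtain ⟨h0, -, h2, h3⟩ := inv t
    exact ⟨by linarith, h2⟩
  refine ⟨hab, fun t => ?_, fun t _ => ?_⟩
  · obtain ⟨h1, h2⟩ := minor_factor_bounds hη hη' hα hα' hb0 hb (fun t => (inv t).1) hab t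
    have hα2 : α ^ 2 ≤ 1 := pow_le_one₀ hα.le hα'
    refine ⟨h1, h2.trans (mul_le_mul_of_nonneg_left ?_ (by positivity))⟩
    -- The base lies in `(0, 1]`, so halving the exponent only increases the power.
    rw [← Real.rpow_natCast]
    refine Real.rpow_le_rpow_of_exponent_ge (by nlinarith) ?_ ?_
    · have : 0 ≤ η * α ^ 2 := by positivity
      linarith
    · exact half_le_self t.cast_nonneg
  · obtain ⟨h0, h1, h2⟩ := signal_invariant hη hη' hα hα' hx0 hx t
    rw [abs_sub_comm, abs_of_nonneg (sub_nonneg.2 h1)]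
    refine le_trans ?_ (inv_le_rpow_shift hη hη' hα hα' t)
    rw [le_div_iff₀ hα]
    exact h2.trans (mul_le_of_le_one_right (pow_nonneg (by linarith) t) h1)
end

section
/- Let F, G ∈ ℝ^{n×k}, M ∈ ℝ^{n×n}, and η ∈ ℝ, and set F⁺ = F − ηMG and G⁺ = G − ηMᵀF. Then (F⁺ᵀF⁺ − G⁺ᵀG⁺) − (FᵀF − GᵀG) = η²·(GᵀMᵀMG − FᵀMMᵀF), and consequently ‖(F⁺ᵀF⁺ − G⁺ᵀG⁺) − (FᵀF − GᵀG)‖ ≤ 2η²·‖M‖²·max{‖F‖, ‖G‖}², where ‖·‖ denotes the spectral norm. -/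
/-!
In the expansion of the two Gram matrices the terms of order `η` agree: both are
`-η (Fᵀ M G + Gᵀ Mᵀ F)`, so they cancel in the difference and only the `η²` terms survive. These are
the Gram matrices of `M G` and `Mᵀ F`, whose spectral norms are `‖M G‖²` and `‖Mᵀ F‖²` by the
C⋆-identity; submultiplicativity and `‖Mᵀ‖ = ‖M‖` bound each by `‖M‖² max(‖F‖, ‖G‖)²`.
-/

open Matrix

/-- Spectral norm (ℓ²-operator norm) of a real matrix. -/
noncomputable def specNorm {m n : ℕ} (M : Matrix (Fin m) (Fin n) ℝ) : ℝ :=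
  ‖LinearMap.toContinuousLinearMap (Matrix.toEuclideanLin M)‖

open scoped Matrix.Norms.L2Operator in
/-- Identifies `specNorm` with Mathlib's `L2Operator` matrix norm, which gives access to the
C⋆-identity and submultiplicativity. -/
theorem specNorm_eq_l2_opNorm {m n : ℕ} (A : Matrix (Fin m) (Fin n) ℝ) : specNorm A = ‖A‖ := rfl

/-- The first-order terms `-η (Fᵀ M G + Gᵀ Mᵀ F)` are common to both Gram matrices and cancel. -/
theorem imbalance_step_eq {n k : ℕ} (F G : Matrix (Fin n) (Fin k) ℝ)
    (M : Matrix (Fin n) (Fin n) ℝ) (η : ℝ) :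
    ((F - η • (M * G))ᵀ * (F - η • (M * G)) -
        (G - η • (Mᵀ * F))ᵀ * (G - η • (Mᵀ * F))) - (Fᵀ * F - Gᵀ * G) =
      (η ^ 2) • (Gᵀ * Mᵀ * M * G - Fᵀ * M * Mᵀ * F) := by
  simp only [transpose_sub, transpose_smul, transpose_mul, transpose_transpose, Matrix.sub_mul,
    Matrix.mul_sub, Matrix.smul_mul, Matrix.mul_smul, Matrix.mul_assoc]
  module

open scoped Matrix.Norms.L2Operator in
theorem norm_gram_mul_le {n k : ℕ} (A : Matrix (Fin n) (Fin n) ℝ)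
    (B : Matrix (Fin n) (Fin k) ℝ) {c : ℝ} (hB : ‖B‖ ≤ c) :
    ‖(A * B)ᵀ * (A * B)‖ ≤ ‖A‖ ^ 2 * c ^ 2 := by
  rw [← conjTranspose_eq_transpose_of_trivial, l2_opNorm_conjTranspose_mul_self, ← sq, ← mul_pow]
  gcongr
  exact (l2_opNorm_mul A B).trans (by gcongr)

/-- **One-step change of the imbalance matrix.**
For `F⁺ = F − η M G` and `G⁺ = G − η Mᵀ F`, the imbalance `FᵀF − GᵀG` changes exactly by
`η² (Gᵀ Mᵀ M G − Fᵀ M Mᵀ F)`, and hence by at most `2η² ‖M‖² max(‖F‖,‖G‖)²` in spectral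
norm. -/
theorem imbalance_one_step_change
    (n k : ℕ) (F G : Matrix (Fin n) (Fin k) ℝ)
    (M : Matrix (Fin n) (Fin n) ℝ) (η : ℝ) :
    ((F - η • (M * G))ᵀ * (F - η • (M * G)) -
        (G - η • (Mᵀ * F))ᵀ * (G - η • (Mᵀ * F))) - (Fᵀ * F - Gᵀ * G) =
      (η ^ 2) • (Gᵀ * Mᵀ * M * G - Fᵀ * M * Mᵀ * F) ∧
    specNorm
        (((F - η • (M * G))ᵀ * (F - η • (M * G)) -
          (G - η • (Mᵀ * F))ᵀ * (G - η • (Mᵀ * F))) - (Fᵀ * F - Gᵀ * G)) ≤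
      2 * η ^ 2 * specNorm M ^ 2 * (max (specNorm F) (specNorm G)) ^ 2 := by
  open scoped Matrix.Norms.L2Operator in
  refine ⟨imbalance_step_eq F G M η, ?_⟩
  rw [imbalance_step_eq]
  simp only [specNorm_eq_l2_opNorm]
  have hMt : ‖Mᵀ‖ = ‖M‖ := by
    rw [← conjTranspose_eq_transpose_of_trivial, l2_opNorm_conjTranspose]
  have hG := norm_gram_mul_le M G (le_max_right ‖F‖ ‖G‖)
  have hF := norm_gram_mul_le Mᵀ F (le_max_left ‖F‖ ‖G‖)
  rw [hMt] at hF
  have hgram : Gᵀ * Mᵀ * M * G - Fᵀ * M * Mᵀ * F =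
      (M * G)ᵀ * (M * G) - (Mᵀ * F)ᵀ * (Mᵀ * F) := by
    simp only [transpose_mul, transpose_transpose, Matrix.mul_assoc]
  rw [hgram, norm_smul, Real.norm_of_nonneg (sq_nonneg η)]
  calc η ^ 2 * ‖(M * G)ᵀ * (M * G) - (Mᵀ * F)ᵀ * (Mᵀ * F)‖
      ≤ η ^ 2 * (‖M‖ ^ 2 * max ‖F‖ ‖G‖ ^ 2 + ‖M‖ ^ 2 * max ‖F‖ ‖G‖ ^ 2) := by
        gcongr
        exact (norm_sub_le _ _).trans (add_le_add hG hF)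
    _ = 2 * η ^ 2 * ‖M‖ ^ 2 * max ‖F‖ ‖G‖ ^ 2 := by ring
end

section
/- Let K be a real p × q matrix and let η ≥ 0 satisfy 3η·‖K‖² ≤ 1, where ‖·‖ denotes the spectral norm. Then ‖K·(I − η·KᵀK)‖ = (1 − η·‖K‖²)·‖K‖, where I is the q × q identity matrix. -/
/-!
Work with the Gram matrix `G = KᴴK` and put `M = K(1 - ηG)`. By the C⋆-identity `‖G‖ = ‖K‖²`, and
`‖M‖² = ‖MᴴM‖`, where `MᴴM = (1 - ηG)G(1 - ηG)` is the value at `G` of the polynomial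
`f(t) = t(1 - ηt)²`. Diagonalizing `G` by an orthogonal matrix turns both norms into sup norms of
diagonals, with entries `λᵢ ≥ 0` and `f(λᵢ)` respectively. Since `3η‖G‖ ≤ 1`, the function `f` is
nondecreasing on `[0, ‖G‖]`, so `‖MᴴM‖ = f(‖G‖) = ((1 - η‖K‖²)‖K‖)²`; taking square roots of
nonnegative numbers gives the claim.
-/

open Matrix

section Aux

open scoped Matrix.Norms.L2Operator

lemma specNorm_eq_norm {m n : ℕ} (M : Matrix (Fin m) (Fin n) ℝ) : specNorm M = ‖M‖ :=
  (Matrix.l2_opNorm_def M).symm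

lemma mul_sq_one_sub_mono {η s t : ℝ} (hη : 0 ≤ η) (hts : t ≤ s) (hs : 3 * η * s ≤ 1) :
    t * (1 - η * t) ^ 2 ≤ s * (1 - η * s) ^ 2 := by
  have hb : 0 ≤ 1 / 3 - η * s := by linarith
  have ha : 0 ≤ 1 / 3 - η * t := by nlinarith [mul_le_mul_of_nonneg_left hts hη]
  -- The difference quotient of `t(1 - ηt)²`, written in `a = 1/3 - ηt` and `b = 1/3 - ηs`.
  have key : s * (1 - η * s) ^ 2 - t * (1 - η * t) ^ 2 =
      (s - t) * ((1 / 3 - η * t) + (1 / 3 - η * s) + (1 / 3 - η * t) ^ 2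
        + (1 / 3 - η * t) * (1 / 3 - η * s) + (1 / 3 - η * s) ^ 2) := by ring
  have hd : 0 ≤ s - t := sub_nonneg.2 hts
  rw [← sub_nonneg, key]
  positivity

lemma norm_pi_mul_sq_one_sub {n : ℕ} {η : ℝ} (hη : 0 ≤ η) (v : Fin n → ℝ) (hv : ∀ i, 0 ≤ v i)
    (h : 3 * η * ‖v‖ ≤ 1) :
    ‖fun i => v i * (1 - η * v i) ^ 2‖ = ‖v‖ * (1 - η * ‖v‖) ^ 2 := by
  have hnn (i) : 0 ≤ v i * (1 - η * v i) ^ 2 := mul_nonneg (hv i) (sq_nonneg _)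
  apply le_antisymm
  · refine (pi_norm_le_iff_of_nonneg (by positivity)).2 fun i => ?_
    rw [Real.norm_of_nonneg (hnn i)]
    exact mul_sq_one_sub_mono hη ((le_abs_self _).trans (norm_le_pi_norm v i)) h
  · rcases isEmpty_or_nonempty (Fin n) with hn | hn
    · simp [Subsingleton.elim v 0]
    · obtain ⟨i, hi⟩ := Finite.exists_max v
      have hvi : ‖v‖ = v i := by
        apply le_antisymm
        · refine (pi_norm_le_iff_of_nonneg (hv i)).2 fun j => ?_
          rw [Real.norm_of_nonneg (hv j)]
          exact hi j
        · exact (le_abs_self _).trans (norm_le_pi_norm v i)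
      rw [hvi]
      exact (le_abs_self _).trans (norm_le_pi_norm (fun i => v i * (1 - η * v i) ^ 2) i)

/-- The norm of `f(G)` is `f(‖G‖)` for positive semidefinite `G` and `f(t) = t(1 - ηt)²`. -/
lemma norm_posSemidef_mul_sq_one_sub {n : ℕ} {η : ℝ} (hη : 0 ≤ η) {G : Matrix (Fin n) (Fin n) ℝ}
    (hG : G.PosSemidef) (h : 3 * η * ‖G‖ ≤ 1) :
    ‖(1 - η • G) * G * (1 - η • G)‖ = ‖G‖ * (1 - η * ‖G‖) ^ 2 := by
  obtain ⟨U, v, hv, hUv⟩ : ∃ (U : unitary (Matrix (Fin n) (Fin n) ℝ)) (v : Fin n → ℝ),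
      (∀ i, 0 ≤ v i) ∧ G = U * diagonal v * star (U : Matrix (Fin n) (Fin n) ℝ) := by
    refine ⟨hG.1.eigenvectorUnitary, hG.1.eigenvalues, hG.eigenvalues_nonneg, ?_⟩
    simpa [Unitary.conjStarAlgAut_apply] using hG.1.spectral_theorem
  have hnorm (D : Matrix (Fin n) (Fin n) ℝ) :
      ‖(U : Matrix (Fin n) (Fin n) ℝ) * D * star (U : Matrix (Fin n) (Fin n) ℝ)‖ = ‖D‖ := by
    rw [← Unitary.coe_star, CStarRing.norm_mul_coe_unitary, CStarRing.norm_coe_unitary_mul]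
  have hGv : ‖G‖ = ‖v‖ := by rw [hUv, hnorm, l2_opNorm_diagonal]
  have hconj : (1 - η • G) * G * (1 - η • G) =
      (U : Matrix (Fin n) (Fin n) ℝ) * diagonal (fun i => v i * (1 - η * v i) ^ 2) *
        star (U : Matrix (Fin n) (Fin n) ℝ) := by
    have hφ : G = Unitary.conjStarAlgAut ℝ _ U (diagonal v) := by
      rw [hUv, Unitary.conjStarAlgAut_apply]
    rw [← Unitary.conjStarAlgAut_apply (S := ℝ), hφ, ← map_smul,
      ← map_one (Unitary.conjStarAlgAut ℝ _ U), ← map_sub, ← map_mul, ← map_mul]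
    congr 1
    rw [← diagonal_one, ← diagonal_smul, diagonal_sub, diagonal_mul_diagonal,
      diagonal_mul_diagonal]
    congr 1
    ext i
    simp only [Pi.smul_apply, smul_eq_mul]
    ring
  rw [hconj, hnorm, l2_opNorm_diagonal, hGv]
  exact norm_pi_mul_sq_one_sub hη v hv (hGv ▸ h)

end Aux

open scoped Matrix.Norms.L2Operator in
lemma norm_mul_one_sub_gram {p q : ℕ} (K : Matrix (Fin p) (Fin q) ℝ) {η : ℝ}
    (hη : 0 ≤ η) (h : 3 * η * ‖K‖ ^ 2 ≤ 1) :
    ‖K * (1 - η • (Kᵀ * K))‖ = (1 - η * ‖K‖ ^ 2) * ‖K‖ := by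
  rw [← conjTranspose_eq_transpose_of_trivial]
  have hGn : ‖Kᴴ * K‖ = ‖K‖ ^ 2 := by rw [l2_opNorm_conjTranspose_mul_self, sq]
  have hM : (K * (1 - η • (Kᴴ * K)))ᴴ * (K * (1 - η • (Kᴴ * K))) =
      (1 - η • (Kᴴ * K)) * (Kᴴ * K) * (1 - η • (Kᴴ * K)) := by
    simp [Matrix.mul_assoc]
  have hsq := l2_opNorm_conjTranspose_mul_self (K * (1 - η • (Kᴴ * K)))
  rw [hM, norm_posSemidef_mul_sq_one_sub hη (posSemidef_conjTranspose_mul_self K) (by rwa [hGn]),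
    hGn] at hsq
  have hpos : 0 ≤ 1 - η * ‖K‖ ^ 2 := by nlinarith [mul_nonneg hη (sq_nonneg ‖K‖)]
  rw [← sq_eq_sq₀ (norm_nonneg _) (mul_nonneg hpos (norm_nonneg _)), sq, ← hsq]
  ring

/-- **Per-step spectral shrinkage of the redundant factor block.**
If `3η‖K‖² ≤ 1` (with `η ≥ 0`), then `‖K (I − η KᵀK)‖ = (1 − η‖K‖²) ‖K‖`. -/
theorem spectral_contraction_identity
    (p q : ℕ) (K : Matrix (Fin p) (Fin q) ℝ) (η : ℝ)
    (hη : 0 ≤ η) (h : 3 * η * (specNorm K) ^ 2 ≤ 1) :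
    specNorm (K * ((1 : Matrix (Fin q) (Fin q) ℝ) - η • (Kᵀ * K))) =
      (1 - η * (specNorm K) ^ 2) * specNorm K := by
  simp only [specNorm_eq_norm] at h ⊢
  exact norm_mul_one_sub_gram K hη h
end

section
/- Let n ≥ 3 and let x, y ∈ ℝ^n be independent random vectors, each with i.i.d. N(0,1) entries, and let θ ∈ [0, π] be the angle between x and y, i.e., cos θ = ⟨x, y⟩/(‖x‖·‖y‖) (almost surely well-defined). Then for every m with 0 ≤ m < π/2: P(|θ − π/2| > m) ≤ (3π·√(n−2)/(4√2))·(sin(π/2 − m))^{n−2} = (3π·√(n−2)/(4√2))·(cos m)^{n−2}. -/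
/-!
Write `x`, `y` for the two blocks of coordinates. The event `|θ - π/2| > m` forces
`sin² m ‖x‖² ‖y‖² < ⟨x, y⟩²`, so in particular `y ≠ 0`. Condition on `y`: the law of `x` is
invariant under isometries, so a reflection carrying `y` to `‖y‖ e₀` turns the event into
`sin² m ‖x‖² < x₀²`, that is `tan² m (x₁² + ⋯ + x_{n-1}²) < x₀²`
(`gaussian_cone_rotation`). Conditioning now on `x₁, …, x_{n-1}`, the tail bound
`P(|g| > a) ≤ exp (-a²/2)` for a standard Gaussian `g` (`gaussian_two_sided_tail`) and the identity
`E exp (-T g²/2) = (1 + T)^(-1/2)` (`integral_exp_neg_sq_gaussian`) with `T = tan² m` bound the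
probability by `(1 + tan² m)^(-(n-1)/2) = cos^(n-1) m` (`gaussian_cone_bound`). This is at most
`cos^(n-2) m`, and the constant `3π√(n-2)/(4√2)` is at least `1`.
-/

open MeasureTheory ProbabilityTheory Real

/-- The angle `θ ∈ [0, π]` between the two blocks of coordinates of `ω`, viewed as two
vectors in `ℝ^n`. -/
noncomputable def gaussAngle {n : ℕ} (ω : (Fin n ⊕ Fin n) → ℝ) : ℝ :=
  Real.arccos ((∑ i, ω (Sum.inl i) * ω (Sum.inr i)) /
    (Real.sqrt (∑ i, ω (Sum.inl i) ^ 2) * Real.sqrt (∑ i, ω (Sum.inr i) ^ 2)))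

/-- If `A` lies in the half-line opposite to `a`, moving the mean from `0` to `a` shrinks the mass of
`A` by at least the factor `exp (-a²/2)`, since `-(x - a)²/2 ≤ -a²/2 - x²/2` when `a x ≤ 0`. -/
lemma gaussian_shift_le (a : ℝ) (A : Set ℝ) (hA : MeasurableSet A) (h : ∀ x ∈ A, a * x ≤ 0) :
    gaussianReal a 1 A ≤ ENNReal.ofReal (exp (-a ^ 2 / 2)) * gaussianReal 0 1 A := by
  rw [gaussianReal_apply _ one_ne_zero, gaussianReal_apply _ one_ne_zero,
    ← lintegral_const_mul _ (measurable_gaussianPDF 0 1)]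
  refine setLIntegral_mono' hA fun x hx => ?_
  rw [gaussianPDF, gaussianPDF, ← ENNReal.ofReal_mul (exp_pos _).le]
  refine ENNReal.ofReal_le_ofReal ?_
  rw [gaussianPDFReal, gaussianPDFReal, mul_left_comm, ← exp_add]
  refine mul_le_mul_of_nonneg_left (exp_le_exp.2 ?_) (by positivity)
  have := h x hx
  push_cast
  nlinarith

/-- The prefactor `1`, instead of the `2` of the Chernoff bound, is what makes the final constant
work for `n = 3`. -/
lemma gaussian_two_sided_tail (a : ℝ) (ha : 0 ≤ a) :
    gaussianReal 0 1 {x | a ^ 2 < x ^ 2} ≤ ENNReal.ofReal (exp (-a ^ 2 / 2)) := by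
  have hsub : {x : ℝ | a ^ 2 < x ^ 2} ⊆ Set.Ioi a ∪ Set.Iio (-a) := by
    intro x hx
    have hx' : a ^ 2 < x ^ 2 := hx
    rw [sq_lt_sq, abs_of_nonneg ha, lt_abs] at hx'
    rcases hx' with h | h
    · exact Or.inl h
    · exact Or.inr (by simp only [Set.mem_Iio]; linarith)
  have h1 : gaussianReal 0 1 (Set.Ioi a) = gaussianReal (-a) 1 (Set.Ioi 0) := by
    have := gaussianReal_map_add_const (μ := 0) (v := 1) (-a)
    rw [zero_add] at this
    rw [← this, Measure.map_apply (by fun_prop) measurableSet_Ioi]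
    congr 1; ext x; simp
  have h2 : gaussianReal 0 1 (Set.Iio (-a)) = gaussianReal a 1 (Set.Iio 0) := by
    have := gaussianReal_map_add_const (μ := 0) (v := 1) a
    rw [zero_add] at this
    rw [← this, Measure.map_apply (by fun_prop) measurableSet_Iio]
    congr 1; ext x; simp [lt_neg_iff_add_neg]
  have h3 := gaussian_shift_le (-a) (Set.Ioi 0) measurableSet_Ioi
    (fun x hx => by have : 0 < x := hx; nlinarith)
  have h4 := gaussian_shift_le a (Set.Iio 0) measurableSet_Iio
    (fun x hx => by have : x < 0 := hx; nlinarith)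
  rw [neg_sq] at h3
  calc _ ≤ gaussianReal 0 1 (Set.Ioi a ∪ Set.Iio (-a)) := measure_mono hsub
    _ ≤ gaussianReal 0 1 (Set.Ioi a) + gaussianReal 0 1 (Set.Iio (-a)) := measure_union_le _ _
    _ ≤ ENNReal.ofReal (exp (-a ^ 2 / 2)) *
        (gaussianReal 0 1 (Set.Ioi 0) + gaussianReal 0 1 (Set.Iio 0)) := by
      rw [h1, h2, mul_add]; exact add_le_add h3 h4
    _ = ENNReal.ofReal (exp (-a ^ 2 / 2)) *
        (gaussianReal 0 1 (Set.Ioi 0 ∪ Set.Iio 0)) := by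
      rw [measure_union _ measurableSet_Iio]
      exact Set.disjoint_left.2 fun x (hx : 0 < x) (hx' : x < 0) => lt_asymm hx hx'
    _ ≤ _ := mul_le_of_le_one_right' prob_le_one

lemma integral_exp_neg_sq_gaussian (T : ℝ) (hT : 0 ≤ T) :
    ∫ x, exp (-(T * x ^ 2) / 2) ∂(gaussianReal 0 1) = (√(1 + T))⁻¹ := by
  rw [integral_gaussianReal_eq_integral_smul one_ne_zero]
  have : ∀ x : ℝ, gaussianPDFReal 0 1 x • exp (-(T * x ^ 2) / 2)
      = (√(2 * π))⁻¹ * exp (-((1 + T) / 2) * x ^ 2) := by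
    intro x
    rw [gaussianPDFReal, smul_eq_mul, mul_assoc, ← exp_add]
    push_cast
    congr 2
    · norm_num
    · ring
  simp_rw [this]
  rw [integral_const_mul, integral_gaussian, ← sqrt_inv, ← sqrt_inv,
    ← sqrt_mul (by positivity)]
  congr 1
  field_simp

/-- The mass of the double cone `s²‖x‖² < x₀²` around the first coordinate axis. -/
lemma gaussian_cone_bound (k : ℕ) (s : ℝ) (hs : s ^ 2 < 1) :
    (Measure.pi (fun _ : Fin (k + 1) => gaussianReal 0 1))
      {x | s ^ 2 * ∑ i, x i ^ 2 < x 0 ^ 2} ≤ ENNReal.ofReal (√(1 - s ^ 2) ^ k) := by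
  set T : ℝ := s ^ 2 / (1 - s ^ 2) with hTdef
  have hpos : 0 < 1 - s ^ 2 := by linarith
  have hT : 0 ≤ T := by positivity
  have hmp := (measurePreserving_piFinSuccAbove (fun _ : Fin (k + 1) => gaussianReal 0 1) 0)
  set S : Set (ℝ × (Fin k → ℝ)) := {p | T * ∑ i, p.2 i ^ 2 < p.1 ^ 2} with hS
  have hSm : MeasurableSet S := measurableSet_lt (by fun_prop) (by fun_prop)
  have hset : {x : Fin (k + 1) → ℝ | s ^ 2 * ∑ i, x i ^ 2 < x 0 ^ 2} =
      MeasurableEquiv.piFinSuccAbove (fun _ => ℝ) 0 ⁻¹' S := by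
    ext x
    simp only [hS, Set.mem_preimage, Set.mem_ofPred_eq, MeasurableEquiv.piFinSuccAbove_apply,
      Fin.insertNthEquiv_zero, Fin.consEquiv_symm_apply, Fin.tail, Fin.sum_univ_succ]
    rw [hTdef, div_mul_eq_mul_div, div_lt_iff₀ hpos]
    constructor <;> intro h <;> linarith
  rw [hset, hmp.measure_preimage hSm.nullMeasurableSet, Measure.prod_apply_symm hSm]
  calc _ ≤ ∫⁻ z : Fin k → ℝ, ENNReal.ofReal (∏ i, exp (-(T * z i ^ 2) / 2))
        ∂(Measure.pi fun _ => gaussianReal 0 1) := by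
        refine lintegral_mono fun z => ?_
        have hR : 0 ≤ T * ∑ i, z i ^ 2 := by positivity
        have := gaussian_two_sided_tail (√(T * ∑ i, z i ^ 2)) (sqrt_nonneg _)
        rw [sq_sqrt hR] at this
        rw [← exp_sum, ← Finset.sum_div, Finset.sum_neg_distrib, ← Finset.mul_sum]
        exact this
    _ = ENNReal.ofReal ((√(1 + T))⁻¹ ^ k) := by
        have hprod := integral_fintype_prod_eq_prod (ι := Fin k) (𝕜 := ℝ) (E := fun _ => ℝ)
          (μ := fun _ => gaussianReal 0 1) (fun _ x => exp (-(T * x ^ 2) / 2))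
        simp only [integral_exp_neg_sq_gaussian T hT, Finset.prod_const, Finset.card_univ,
          Fintype.card_fin] at hprod
        rw [← hprod, ofReal_integral_eq_lintegral_ofReal]
        · refine Integrable.of_bound (C := 1)
            (Measurable.aestronglyMeasurable (by fun_prop)) (ae_of_all _ fun z => ?_)
          rw [norm_of_nonneg (Finset.prod_nonneg fun _ _ => (exp_pos _).le)]
          refine Finset.prod_le_one (fun _ _ => (exp_pos _).le) fun i _ => exp_le_one_iff.2 ?_
          have : 0 ≤ T * z i ^ 2 := by positivity
          linarith
        · exact ae_of_all _ fun z => Finset.prod_nonneg fun _ _ => (exp_pos _).le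
    _ = _ := by
        rw [← sqrt_inv]
        congr 3
        rw [hTdef]
        field_simp
        ring

/-- By rotation invariance, the double cone around an arbitrary nonzero `y` has the same mass as the
one around the first coordinate axis. -/
lemma gaussian_cone_rotation (k : ℕ) (s : ℝ) (y : Fin (k + 1) → ℝ)
    (hy : 0 < ∑ i, y i ^ 2) :
    (Measure.pi (fun _ : Fin (k + 1) => gaussianReal 0 1))
      {x | s ^ 2 * ((∑ i, x i ^ 2) * ∑ i, y i ^ 2) < (∑ i, x i * y i) ^ 2} =
    (Measure.pi (fun _ : Fin (k + 1) => gaussianReal 0 1))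
      {x | s ^ 2 * ∑ i, x i ^ 2 < x 0 ^ 2} := by
  set v : EuclideanSpace ℝ (Fin (k + 1)) := WithLp.toLp 2 y with hv
  set e : EuclideanSpace ℝ (Fin (k + 1)) := EuclideanSpace.single 0 1 with he
  have hvn : ‖v‖ ^ 2 = ∑ i, y i ^ 2 := by simp [EuclideanSpace.norm_sq_eq, hv]
  -- the reflection in the bisector of `v` and `w = ‖v‖ e₀` exchanges these two vectors
  set w : EuclideanSpace ℝ (Fin (k + 1)) := ‖v‖ • e with hw
  have hvw : ‖v‖ = ‖w‖ := by simp [hw, he, norm_smul]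
  set ρ : EuclideanSpace ℝ (Fin (k + 1)) ≃ₗᵢ[ℝ] EuclideanSpace ℝ (Fin (k + 1)) :=
    Submodule.reflection (ℝ ∙ (v - w))ᗮ with hρ
  have hρv : ρ v = w := Submodule.reflection_sub hvw
  have hmap : (Measure.pi (fun _ : Fin (k + 1) => gaussianReal 0 1)).map (WithLp.toLp 2) =
      stdGaussian (EuclideanSpace ℝ (Fin (k + 1))) := map_pi_eq_stdGaussian
  have hm1 : MeasurableSet
      {x : EuclideanSpace ℝ (Fin (k + 1)) | s ^ 2 * (‖x‖ ^ 2 * ‖v‖ ^ 2) < inner ℝ x v ^ 2} :=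
    measurableSet_lt (by fun_prop) (by fun_prop)
  have hm2 : MeasurableSet {x : EuclideanSpace ℝ (Fin (k + 1)) | s ^ 2 * ‖x‖ ^ 2 < (x 0) ^ 2} :=
    measurableSet_lt (by fun_prop) (by fun_prop)
  have hL : (Measure.pi (fun _ : Fin (k + 1) => gaussianReal 0 1))
      {x | s ^ 2 * ((∑ i, x i ^ 2) * ∑ i, y i ^ 2) < (∑ i, x i * y i) ^ 2} =
      stdGaussian (EuclideanSpace ℝ (Fin (k + 1)))
      {x : EuclideanSpace ℝ (Fin (k + 1)) | s ^ 2 * (‖x‖ ^ 2 * ‖v‖ ^ 2) < inner ℝ x v ^ 2} := by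
    rw [← hmap, Measure.map_apply (by fun_prop) hm1]
    congr 1; ext x
    simp [EuclideanSpace.norm_sq_eq, hv, PiLp.inner_apply, mul_comm]
  have hR : (Measure.pi (fun _ : Fin (k + 1) => gaussianReal 0 1))
      {x | s ^ 2 * ∑ i, x i ^ 2 < x 0 ^ 2} =
      stdGaussian (EuclideanSpace ℝ (Fin (k + 1)))
        {x : EuclideanSpace ℝ (Fin (k + 1)) | s ^ 2 * ‖x‖ ^ 2 < (x 0) ^ 2} := by
    rw [← hmap, Measure.map_apply (by fun_prop) hm2]
    congr 1; ext x
    simp [EuclideanSpace.norm_sq_eq]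
  rw [hL, hR]
  nth_rewrite 2 [← stdGaussian_map ρ]
  rw [Measure.map_apply ρ.continuous.measurable hm2]
  congr 1; ext x
  have hin : inner ℝ x v = ‖v‖ * (ρ x) 0 := by
    rw [← ρ.inner_map_map, hρv, hw, inner_smul_right, he, EuclideanSpace.inner_single_right]
    simp
  have hv0 : 0 < ‖v‖ ^ 2 := by rw [hvn]; exact hy
  simp only [Set.mem_ofPred_eq, Set.mem_preimage, hin, ρ.norm_map, mul_pow]
  rw [← mul_assoc, mul_comm (‖v‖ ^ 2), mul_lt_mul_iff_left₀ hv0]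

/-- The strict conclusion excludes `A = 0` and `B = 0`: there the quotient is `0` by convention, the
angle is `π / 2`, and the hypothesis `h` fails. -/
lemma sin_sq_lt_of_angle (m d A B : ℝ) (hm0 : 0 ≤ m) (hm : m < π / 2) (hA : 0 ≤ A) (hB : 0 ≤ B)
    (h : m < |arccos (d / (√A * √B)) - π / 2|) : sin m ^ 2 * (A * B) < d ^ 2 := by
  set q := d / (√A * √B) with hq
  have h1 : sin m ^ 2 < q ^ 2 := by
    by_contra! hcon
    have hsin : 0 ≤ sin m := sin_nonneg_of_nonneg_of_le_pi hm0 (by linarith [pi_pos])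
    have hab := abs_le.1 (abs_le_of_sq_le_sq hcon hsin)
    have h2 : arcsin q ≤ m := by
      rw [arcsin_le_iff_le_sin' ⟨by linarith, hm⟩]; exact hab.2
    have h3 : -m ≤ arcsin q := by
      rw [le_arcsin_iff_sin_le' ⟨by linarith, by linarith⟩, sin_neg]; exact hab.1
    have : |arccos q - π / 2| ≤ m := by
      rw [arccos, abs_le]; constructor <;> linarith
    linarith
  have hq2 : q ^ 2 = d ^ 2 / (A * B) := by
    rw [hq, div_pow, mul_pow, sq_sqrt hA, sq_sqrt hB]
  rcases (mul_nonneg hA hB).eq_or_lt with h0 | h0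
  · rw [hq2, ← h0, div_zero] at h1
    exact absurd h1 (not_lt.2 (sq_nonneg _))
  · rwa [hq2, lt_div_iff₀ h0] at h1

lemma gaussian_angle_tail_cos (k : ℕ) (m : ℝ) (hm0 : 0 ≤ m) (hm : m < π / 2) :
    (Measure.pi (fun _ : Fin (k + 1) ⊕ Fin (k + 1) => gaussianReal 0 1))
        {ω | |gaussAngle ω - π / 2| > m} ≤ ENNReal.ofReal (cos m ^ k) := by
  set S : Set ((Fin (k + 1) → ℝ) × (Fin (k + 1) → ℝ)) :=
    {p | sin m ^ 2 * ((∑ i, p.1 i ^ 2) * ∑ i, p.2 i ^ 2) < (∑ i, p.1 i * p.2 i) ^ 2} with hS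
  have hSm : MeasurableSet S := measurableSet_lt (by fun_prop) (by fun_prop)
  have hmp := measurePreserving_sumPiEquivProdPi
    (fun _ : Fin (k + 1) ⊕ Fin (k + 1) => gaussianReal 0 1)
  have hcos : 0 < cos m := cos_pos_of_mem_Ioo ⟨by linarith, hm⟩
  have hsc := sin_sq_add_cos_sq m
  calc _ ≤ (Measure.pi (fun _ : Fin (k + 1) ⊕ Fin (k + 1) => gaussianReal 0 1))
        (MeasurableEquiv.sumPiEquivProdPi (fun _ => ℝ) ⁻¹' S) := by
        refine measure_mono fun ω hω => ?_
        exact sin_sq_lt_of_angle m _ _ _ hm0 hm (by positivity) (by positivity) hω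
    _ = ∫⁻ y, (Measure.pi (fun _ : Fin (k + 1) => gaussianReal 0 1)) ((fun x => (x, y)) ⁻¹' S)
          ∂(Measure.pi (fun _ : Fin (k + 1) => gaussianReal 0 1)) := by
        rw [hmp.measure_preimage hSm.nullMeasurableSet, Measure.prod_apply_symm hSm]
    _ ≤ ∫⁻ y, ENNReal.ofReal (cos m ^ k)
          ∂(Measure.pi (fun _ : Fin (k + 1) => gaussianReal 0 1)) := by
        refine lintegral_mono fun y => ?_
        have hy0 : 0 ≤ ∑ i, y i ^ 2 := by positivity
        rcases hy0.eq_or_lt with h0 | h0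
        · have hyz : ∀ i, y i = 0 := fun i => by
            have := (Finset.sum_eq_zero_iff_of_nonneg fun i _ => sq_nonneg (y i)).1 h0.symm i
              (Finset.mem_univ i)
            exact pow_eq_zero_iff two_ne_zero |>.1 this
          have : (fun x => (x, y)) ⁻¹' S = ∅ := by
            ext x; simp [hS, hyz]
          simp [this]
        · have h1 := gaussian_cone_rotation k (sin m) y h0
          have h2 := gaussian_cone_bound k (sin m) (by nlinarith)
          rw [← h1, show 1 - sin m ^ 2 = cos m ^ 2 by linarith, sqrt_sq hcos.le] at h2
          exact h2
    _ = _ := by simp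

/-- **Concentration of the angle between independent Gaussian vectors.**
For `x, y ∈ ℝ^n` independent with i.i.d. `N(0,1)` entries and `n ≥ 3`, the angle `θ`
between `x` and `y` satisfies, for every `0 ≤ m < π/2`,
`P(|θ − π/2| > m) ≤ (3π√(n−2)/(4√2)) (sin(π/2 − m))^{n−2}`, and
`(sin(π/2 − m))^{n−2} = (cos m)^{n−2}`. -/
theorem gaussian_angle_tail_bound
    (n : ℕ) (m : ℝ) (hn : 3 ≤ n) (hm0 : 0 ≤ m) (hm : m < π / 2) :
    (Measure.pi (fun _ : Fin n ⊕ Fin n => gaussianReal 0 1))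
        {ω | |gaussAngle ω - π / 2| > m} ≤
      ENNReal.ofReal
        (3 * π * Real.sqrt (n - 2) / (4 * Real.sqrt 2) *
          (Real.sin (π / 2 - m)) ^ (n - 2)) ∧
    (Real.sin (π / 2 - m)) ^ (n - 2) = (Real.cos m) ^ (n - 2) := by
  rw [sin_pi_div_two_sub]
  refine ⟨?_, rfl⟩
  obtain ⟨k, rfl⟩ : ∃ k, n = k + 1 + 1 := ⟨n - 2, by omega⟩
  refine (gaussian_angle_tail_cos (k + 1) m hm0 hm).trans (ENNReal.ofReal_le_ofReal ?_)
  have hcos : 0 < cos m := cos_pos_of_mem_Ioo ⟨by linarith, hm⟩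
  have hk : (1 : ℝ) ≤ k := by exact_mod_cast (by omega : 1 ≤ k)
  have h1 : (1 : ℝ) ≤ √(((k + 1 + 1 : ℕ) : ℝ) - 2) := by
    rw [one_le_sqrt]; push_cast; linarith
  have h2 : √2 ≤ 3 / 2 := by rw [sqrt_le_left (by norm_num)]; norm_num
  have hC : 1 ≤ 3 * π * √(((k + 1 + 1 : ℕ) : ℝ) - 2) / (4 * √2) := by
    rw [one_le_div (by positivity)]
    nlinarith [pi_gt_three]
  have hkk : k + 1 + 1 - 2 = k := by omega
  rw [hkk]
  calc cos m ^ (k + 1) ≤ cos m ^ k := pow_le_pow_of_le_one hcos.le (cos_le_one m) (Nat.le_succ k)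
    _ ≤ _ := le_mul_of_one_le_left (by positivity) hC
end
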